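/- Let G be a finite weighted graph, let H be a subgraph of G, and let e be an edge of H with endpoints x and y. Then for every β ≥ 0, βJ_e (⟨σ_x σ_y⟩_{G,β,0} − ⟨σ_x σ_y⟩_{H,β,0}) = (C_{H,β} ⊗ C_{G,β})(ℬ_e), where ℬ_e is the set of pairs of currents (n₁, n₂) ∈ Ω_H × Ω_G such that n₁(e) = 0, n₂(e) = 1, and x and y are connected by an (n₁+n₂)-open path in G ∖ {e} but not in H ∖ {e}. -/

import Mathlib

open MeasureTheory Filter Topology

noncomputable section

namespace IsingPaper

/-- A finite weighted graph: a finite vertex set together with symmetric non-negative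
coupling constants (`J u v > 0` meaning that `{u,v}` is an edge). -/
structure FinWeightedGraph : Type 1 where
  V : Type
  fintypeV : Fintype V
  J : V → V → ℝ
  J_symm : ∀ u v, J u v = J v u
  J_nonneg : ∀ u v, 0 ≤ J u v
  J_irrefl : ∀ v, J v v = 0

namespace FinWeightedGraph

variable (G : FinWeightedGraph)

instance : Fintype G.V := G.fintypeV

/-- The coupling constants as a function on unordered pairs. -/
def J2 : Sym2 G.V → ℝ := Sym2.lift ⟨G.J, G.J_symm⟩

/-- The weight `w_β(n) = ∏_e (βJ_e)^{n_e} / n_e!` of a current `n`.  (A current taking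
a positive value on a non-edge gets weight zero, so currents may be indexed by all
unordered pairs of vertices.) -/
def curWeight (β : ℝ) (n : Sym2 G.V → ℕ) : ℝ := by
  classical exact ∏ e : Sym2 G.V, (β * G.J2 e) ^ (n e) / (Nat.factorial (n e))

/-- The total current at the vertex `v`. -/
def degSum (v : G.V) (n : Sym2 G.V → ℕ) : ℕ := by
  classical exact ∑ e : Sym2 G.V, if v ∈ e then n e else 0

/-- The set `∂n` of sources of a current. -/
def sources (n : Sym2 G.V → ℕ) : Set G.V := {v | Odd (G.degSum v n)}

/-- The current `n` lives on the subgraph with edge set `S`. -/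
def supportedOn (S : Set (Sym2 G.V)) (n : Sym2 G.V → ℕ) : Prop :=
  ∀ e, n e ≠ 0 → e ∈ S

/-- The partition function `∑_{n : ∂n = ∅} w_β(n)` of sourceless currents on the
subgraph with edge set `S`. -/
def curZ (S : Set (Sym2 G.V)) (β : ℝ) : ℝ := by
  classical exact ∑' n : Sym2 G.V → ℕ,
    if G.sources n = ∅ ∧ G.supportedOn S n then G.curWeight β n else 0

/-- The Ising two-point function `⟨σ_x σ_y⟩` on the subgraph with edge set `S`,
expressed via the random current representation. -/
def twoPoint (S : Set (Sym2 G.V)) (β : ℝ) (x y : G.V) : ℝ := by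
  classical exact
  (∑' n : Sym2 G.V → ℕ,
    if G.sources n = {x, y} ∧ G.supportedOn S n then G.curWeight β n else 0) / G.curZ S β

/-- `x` and `y` are joined by an `m`-open path avoiding the edge `e` inside the
subgraph with edge set `S`. -/
def conn (S : Set (Sym2 G.V)) (e : Sym2 G.V) (m : Sym2 G.V → ℕ) (x y : G.V) : Prop :=
  Relation.ReflTransGen (fun a b => s(a, b) ≠ e ∧ s(a, b) ∈ S ∧ 1 ≤ m s(a, b)) x y

/-!
Multiplying out the definition of the two-point functions, the left-hand side becomes a difference
of two sums over pairs of currents, with sources `(∅, {x, y})` and `({x, y}, ∅)`. The switching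
lemma turns the second one into the part of the first one on which `n₁ + n₂` connects `x` to `y`
in `S`, so the difference is carried by the pairs that do not connect them there. Such pairs vanish
at `e = {x, y}`, and raising `n₂ e` from `0` to `1` removes the sources of `n₂` at the cost of a
factor `β J_e`.

Both the switching lemma and the positivity of the partition function come from averaging over spin
configurations `σ`: by orthogonality of characters, the average of
`∏_{v ∈ A} σ_v ∏_{{a,b}} (σ_a σ_b) ^ n_{ab}` is the indicator of `∂n = A`.
-/

open scoped symmDiff

section Pi

variable {ι κ R : Type*} [Fintype ι] [NormedCommRing R] {f : ι → κ → R}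

theorem summable_norm_prod_apply (hf : ∀ i, Summable fun k => ‖f i k‖) :
    Summable fun n : ι → κ => ∏ i, ‖f i (n i)‖ := by
  classical
  have hnonneg : ∀ n : ι → κ, 0 ≤ ∏ i, ‖f i (n i)‖ := fun n =>
    Finset.prod_nonneg fun i _ => norm_nonneg _
  refine summable_of_sum_le hnonneg (c := ∏ i, ∑' k, ‖f i k‖) fun u => ?_
  calc ∑ n ∈ u, ∏ i, ‖f i (n i)‖
      ≤ ∑ n ∈ Fintype.piFinset fun i => u.image fun n => n i, ∏ i, ‖f i (n i)‖ :=
        Finset.sum_le_sum_of_subset_of_nonneg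
          (fun n hn => Fintype.mem_piFinset.2 fun i => Finset.mem_image_of_mem (· i) hn)
          fun n _ _ => hnonneg n
    _ = ∏ i, ∑ k ∈ u.image fun n => n i, ‖f i k‖ := by rw [Finset.prod_univ_sum]
    _ ≤ ∏ i, ∑' k, ‖f i k‖ :=
        Finset.prod_le_prod (fun i _ => Finset.sum_nonneg fun k _ => norm_nonneg _)
          fun i _ => (hf i).sum_le_tsum _ fun k _ => norm_nonneg _

variable [NormOneClass R] [CompleteSpace R]

theorem summable_prod_apply (hf : ∀ i, Summable fun k => ‖f i k‖) :
    Summable fun n : ι → κ => ∏ i, f i (n i) :=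
  .of_norm_bounded (summable_norm_prod_apply hf) fun _ => Finset.norm_prod_le _ _

theorem tsum_prod_apply (hf : ∀ i, Summable fun k => ‖f i k‖) :
    ∑' n : ι → κ, ∏ i, f i (n i) = ∏ i, ∑' k, f i k := by
  classical
  have hbox : Tendsto (fun s : Finset κ => Fintype.piFinset fun _ : ι => s) atTop atTop := by
    refine tendsto_atTop_finset_of_monotone (fun s t h => Fintype.piFinset_subset _ _ fun _ => h)
      fun n => ⟨Finset.univ.image n, ?_⟩
    simp
  refine tendsto_nhds_unique ((summable_prod_apply hf).hasSum.comp hbox) ?_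
  simp only [Function.comp_def, Finset.sum_prod_piFinset]
  exact tendsto_finsetProd _ fun i _ => (hf i).of_norm.hasSum

end Pi

theorem hasSum_comp_add_fst_iff {M R : Type*} [AddCommMonoid M] [IsCancelAdd M] [PartialOrder M]
    [CanonicallyOrderedAdd M] [AddCommMonoid R] [TopologicalSpace R] {f : M × M → R}
    (hf : ∀ m n, ¬n ≤ m → f (m, n) = 0) {a : R} :
    HasSum (fun p : M × M => f (p.1 + p.2, p.1)) a ↔ HasSum f a := by
  have hinj : Function.Injective fun p : M × M => (p.1 + p.2, p.1) := by
    rintro ⟨m, k⟩ ⟨m', k'⟩ h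
    obtain ⟨hadd, rfl : m = m'⟩ := Prod.mk.inj h
    rw [add_left_cancel (show m + k = m + k' from hadd)]
  refine hinj.hasSum_iff fun ⟨m, n⟩ hmn => hf m n fun hle => hmn ?_
  obtain ⟨d, rfl⟩ := le_iff_exists_add.1 hle
  exact ⟨(n, d), rfl⟩

section SpinCharacters

variable {V : Type*} [Fintype V]

/-- The product `σ_A = ∏_{v ∈ A} σ_v` of the spins in `A`, as a real character of the group of spin
configurations. -/
def spinChar (A : Set V) : (V → ℤˣ) →* ℝ where
  toFun σ := ∏ v, A.mulIndicator (fun u => ((σ u : ℤ) : ℝ)) v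
  map_one' := by simp
  map_mul' σ τ := by simp [← Finset.prod_mul_distrib, ← Set.mulIndicator_mul]

theorem spinChar_apply (A : Set V) (σ : V → ℤˣ) :
    spinChar A σ = ∏ v, A.mulIndicator (fun u => ((σ u : ℤ) : ℝ)) v := rfl

theorem spin_mul_self (u : ℤˣ) : ((u : ℤ) : ℝ) * ((u : ℤ) : ℝ) = 1 := by
  exact_mod_cast Int.units_coe_mul_self u

theorem spinChar_empty (σ : V → ℤˣ) : spinChar ∅ σ = 1 := by
  simp [spinChar_apply]

theorem spinChar_symmDiff (A B : Set V) (σ : V → ℤˣ) :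
    spinChar (A ∆ B) σ = spinChar A σ * spinChar B σ := by
  simp only [spinChar_apply, ← Finset.prod_mul_distrib]
  refine Finset.prod_congr rfl fun v _ => ?_
  by_cases hA : v ∈ A <;> by_cases hB : v ∈ B <;>
    simp [Set.mulIndicator, Set.mem_symmDiff, hA, hB, spin_mul_self]

theorem abs_spinChar (A : Set V) (σ : V → ℤˣ) : |spinChar A σ| = 1 := by
  rw [← abs_one, abs_eq_iff_mul_self_eq, ← spinChar_symmDiff, symmDiff_self, Set.bot_eq_empty,
    spinChar_empty, mul_one]

theorem spinChar_singleton (v : V) (σ : V → ℤˣ) : spinChar {v} σ = (σ v : ℤ) := by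
  classical
  simp [spinChar_apply, Set.mulIndicator_apply]

theorem spinChar_pair {x y : V} (hxy : x ≠ y) (σ : V → ℤˣ) :
    spinChar {x, y} σ = ((σ x * σ y : ℤˣ) : ℤ) := by
  have : ({x, y} : Set V) = {x} ∆ {y} := by
    ext v
    grind
  simp [this, spinChar_symmDiff, spinChar_singleton]

open Classical in
theorem sum_spinChar (A : Set V) :
    ∑ σ, spinChar A σ = if A = ∅ then 2 ^ Fintype.card V else 0 := by
  split_ifs with hA
  · simp [hA, spinChar_empty]
  · obtain ⟨a, ha⟩ := Set.nonempty_iff_ne_empty.2 hA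
    refine sum_hom_units_eq_zero _ fun h => ?_
    have hflip : spinChar A (Pi.mulSingle a (-1)) = -1 := by
      rw [spinChar_apply, Finset.prod_eq_single a]
      · simp [ha]
      · intro v _ hv
        simp [Set.mulIndicator_apply, hv]
      · simp
    rw [h, MonoidHom.one_apply] at hflip
    norm_num at hflip

end SpinCharacters

open Classical in
/-- A loop counts once, not twice, in the degree of its vertex: loops do have sources. -/
theorem degSum_eq (v : G.V) (n : Sym2 G.V → ℕ) :
    G.degSum v n = ∑ e, if v ∈ e then n e else 0 := rfl

open Classical in
theorem curWeight_eq (β : ℝ) (n : Sym2 G.V → ℕ) :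
    G.curWeight β n = ∏ e, (β * G.J2 e) ^ (n e) / (Nat.factorial (n e)) := rfl

variable {G}

theorem degSum_add (v : G.V) (m n : Sym2 G.V → ℕ) :
    G.degSum v (m + n) = G.degSum v m + G.degSum v n := by
  classical
  simp only [degSum_eq, ← Finset.sum_add_distrib, Pi.add_apply, ite_add_zero]

theorem sources_add (m n : Sym2 G.V → ℕ) :
    G.sources (m + n) = G.sources m ∆ G.sources n := by
  ext v
  simp only [sources, degSum_add, Set.mem_ofPred_eq, Set.mem_symmDiff, Nat.odd_add,
    ← Nat.not_odd_iff_even]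
  tauto

open Classical in
theorem sources_single (x y : G.V) : G.sources (Pi.single s(x, y) 1) = {x, y} := by
  ext v
  have hdeg : G.degSum v (Pi.single s(x, y) 1) = if v ∈ s(x, y) then 1 else 0 := by
    rw [degSum_eq, Finset.sum_eq_single s(x, y)] <;> simp +contextual
  by_cases hv : v ∈ s(x, y) <;> simp_all [sources]

theorem supportedOn_univ (n : Sym2 G.V → ℕ) : G.supportedOn Set.univ n := fun _ _ => trivial

theorem J2_diag (v : G.V) : G.J2 s(v, v) = 0 := G.J_irrefl v

theorem curWeight_mul_curWeight (β : ℝ) (n₁ n₂ : Sym2 G.V → ℕ) :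
    G.curWeight β n₁ * G.curWeight β n₂ =
      G.curWeight β (n₁ + n₂) * ∏ e, (((n₁ + n₂) e).choose (n₁ e) : ℝ) := by
  classical
  simp only [curWeight_eq, ← Finset.prod_mul_distrib]
  refine Finset.prod_congr rfl fun e _ => ?_
  rw [Pi.add_apply, Nat.cast_add_choose, pow_add]
  field_simp

open Classical in
theorem curWeight_add_single (β : ℝ) {n : Sym2 G.V → ℕ} {e : Sym2 G.V} (hn : n e = 0) :
    G.curWeight β (n + Pi.single e 1) = β * G.J2 e * G.curWeight β n := by
  rw [curWeight_eq, curWeight_eq, ← Finset.mul_prod_erase _ _ (Finset.mem_univ e),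
    ← Finset.mul_prod_erase _ _ (Finset.mem_univ e), ← mul_assoc]
  congr 1
  · simp [hn]
  · refine Finset.prod_congr rfl fun f hf => ?_
    simp [Finset.ne_of_mem_erase hf]

theorem apply_eq_zero_of_curWeight_ne_zero {β : ℝ} {n : Sym2 G.V → ℕ}
    (hn : G.curWeight β n ≠ 0) {e : Sym2 G.V} (he : G.J2 e = 0) : n e = 0 := by
  classical
  rw [curWeight_eq, Finset.prod_ne_zero_iff] at hn
  by_contra h
  exact hn e (Finset.mem_univ e) (by simp [he, h])

theorem spinChar_sources (n : Sym2 G.V → ℕ) (σ : G.V → ℤˣ) :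
    spinChar (G.sources n) σ = ∏ e : Sym2 G.V, spinChar (e : Set G.V) σ ^ n e := by
  classical
  have hvertex : ∀ v, (G.sources n).mulIndicator (fun u => ((σ u : ℤ) : ℝ)) v =
      ((σ v : ℤ) : ℝ) ^ G.degSum v n := by
    intro v
    have hsq : ((σ v : ℤ) : ℝ) ^ 2 = 1 := by rw [sq, spin_mul_self]
    rcases Nat.even_or_odd' (G.degSum v n) with ⟨k, hk | hk⟩
    · simp [sources, hk, pow_mul, hsq]
    · simp [Set.mulIndicator_apply, sources, hk, pow_add, pow_mul, hsq]
  have hedge : ∀ (e : Sym2 G.V) (v : G.V),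
      (e : Set G.V).mulIndicator (fun u => ((σ u : ℤ) : ℝ)) v ^ n e =
        ((σ v : ℤ) : ℝ) ^ (if v ∈ e then n e else 0) := by
    intro e v
    by_cases hv : v ∈ e <;> simp [hv]
  simp only [spinChar_apply, hvertex, degSum_eq, ← Finset.prod_pow_eq_pow_sum, ← Finset.prod_pow,
    hedge]
  exact Finset.prod_comm

open Classical in
theorem sum_spinChar_mul_prod_pow (A : Set G.V) (n : Sym2 G.V → ℕ) :
    ∑ σ, spinChar A σ * ∏ e : Sym2 G.V, spinChar (e : Set G.V) σ ^ n e =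
      if G.sources n = A then 2 ^ Fintype.card G.V else 0 := by
  simp only [← spinChar_sources, ← spinChar_symmDiff, sum_spinChar, ← Set.bot_eq_empty,
    symmDiff_eq_bot, eq_comm (a := A)]

/-- The currents on the subgraph with edge set `S` whose set of sources is `A`. -/
def currentsWithSources (S : Set (Sym2 G.V)) (A : Set G.V) : Set (Sym2 G.V → ℕ) :=
  {n | G.sources n = A ∧ G.supportedOn S n}

/-- The edge factor at `e` of a current on the subgraph with edge set `S`, twisted by the spin
product `σ_e` of the endpoints of `e`. -/
def twistedFactor (S : Set (Sym2 G.V)) (f : Sym2 G.V → ℕ → ℝ) (σ : G.V → ℤˣ) (e : Sym2 G.V) :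
    ℕ → ℝ :=
  {k | k ≠ 0 → e ∈ S}.indicator fun k => f e k * spinChar (e : Set G.V) σ ^ k

theorem summable_norm_twistedFactor (S : Set (Sym2 G.V)) {f : Sym2 G.V → ℕ → ℝ}
    (hf : ∀ e, Summable (f e)) (σ : G.V → ℤˣ) (e : Sym2 G.V) :
    Summable fun k => ‖twistedFactor S f σ e k‖ := by
  refine (hf e).norm.of_nonneg_of_le (fun k => norm_nonneg _) fun k => ?_
  refine (norm_indicator_le_norm_self _ _).trans ?_
  simp [abs_spinChar]

open Classical in
theorem tsum_twistedFactor (S : Set (Sym2 G.V)) (f : Sym2 G.V → ℕ → ℝ) (σ : G.V → ℤˣ)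
    (e : Sym2 G.V) :
    ∑' k, twistedFactor S f σ e k =
      if e ∈ S then ∑' k, f e k * spinChar (e : Set G.V) σ ^ k else f e 0 := by
  split_ifs with he
  · simp [twistedFactor, he, Set.indicator]
  · rw [tsum_eq_single 0 fun k hk => by simp [twistedFactor, he, hk]]
    simp [twistedFactor]

open Classical in
theorem sum_spinChar_mul_prod_twistedFactor (S : Set (Sym2 G.V)) (A : Set G.V)
    (f : Sym2 G.V → ℕ → ℝ) (n : Sym2 G.V → ℕ) :
    ∑ σ, spinChar A σ * ∏ e, twistedFactor S f σ e (n e) =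
      2 ^ Fintype.card G.V * (currentsWithSources S A).indicator (fun n => ∏ e, f e (n e)) n := by
  by_cases hS : G.supportedOn S n
  · have hfactor : ∀ σ, ∏ e, twistedFactor S f σ e (n e) =
        (∏ e, f e (n e)) * ∏ e : Sym2 G.V, spinChar (e : Set G.V) σ ^ n e := by
      intro σ
      rw [← Finset.prod_mul_distrib]
      exact Finset.prod_congr rfl fun e _ =>
        Set.indicator_of_mem (s := {k | k ≠ 0 → e ∈ S}) (hS e) _
    simp only [hfactor, mul_left_comm (spinChar A _), ← Finset.mul_sum,
      sum_spinChar_mul_prod_pow]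
    by_cases hA : G.sources n = A <;> simp [currentsWithSources, hA, hS, mul_comm]
  · obtain ⟨e, hne, heS⟩ : ∃ e, n e ≠ 0 ∧ e ∉ S := by
      simpa [supportedOn] using hS
    have hzero : ∀ σ, ∏ e, twistedFactor S f σ e (n e) = 0 := fun σ =>
      Finset.prod_eq_zero (Finset.mem_univ e) (Set.indicator_of_notMem (by simp [hne, heS]) _)
    simp [hzero, currentsWithSources, hS]

open Classical in
theorem two_pow_mul_tsum_currentsWithSources (S : Set (Sym2 G.V)) (A : Set G.V)
    {f : Sym2 G.V → ℕ → ℝ} (hf : ∀ e, Summable (f e)) :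
    2 ^ Fintype.card G.V *
        ∑' n, (currentsWithSources S A).indicator (fun n => ∏ e, f e (n e)) n =
      ∑ σ, spinChar A σ *
        ∏ e, if e ∈ S then ∑' k, f e k * spinChar (e : Set G.V) σ ^ k else f e 0 := by
  have hsummable σ := summable_norm_twistedFactor S hf σ
  simp only [← tsum_mul_left, ← sum_spinChar_mul_prod_twistedFactor]
  rw [Summable.tsum_finsetSum fun σ _ => (summable_prod_apply (hsummable σ)).mul_left _]
  simp only [tsum_mul_left, tsum_prod_apply (hsummable _), tsum_twistedFactor]

open Classical in
theorem summable_curWeight (β : ℝ) : Summable (G.curWeight β) :=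
  (summable_prod_apply fun e => (Real.summable_pow_div_factorial (β * G.J2 e)).norm).congr
    (G.curWeight_eq β)

/-- The current weights, restricted to the currents on the subgraph with edge set `S` whose set of
sources is `A`. -/
def sourcedWeight (S : Set (Sym2 G.V)) (β : ℝ) (A : Set G.V) : (Sym2 G.V → ℕ) → ℝ :=
  (currentsWithSources S A).indicator (G.curWeight β)

theorem summable_sourcedWeight (S : Set (Sym2 G.V)) (β : ℝ) (A : Set G.V) :
    Summable (sourcedWeight S β A) :=
  (summable_curWeight β).indicator _

open Classical in
theorem sourcedWeight_apply (S : Set (Sym2 G.V)) (β : ℝ) (A : Set G.V) (n : Sym2 G.V → ℕ) :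
    sourcedWeight S β A n =
      if G.sources n = A ∧ G.supportedOn S n then G.curWeight β n else 0 := by
  simp only [sourcedWeight, currentsWithSources, Set.indicator_apply, Set.mem_ofPred_eq]

theorem curZ_eq_tsum_sourcedWeight (S : Set (Sym2 G.V)) (β : ℝ) :
    G.curZ S β = ∑' n, sourcedWeight S β ∅ n := by
  simp only [curZ, sourcedWeight_apply]

theorem twoPoint_eq_tsum_sourcedWeight_div (S : Set (Sym2 G.V)) (β : ℝ) (x y : G.V) :
    G.twoPoint S β x y = (∑' n, sourcedWeight S β {x, y} n) / G.curZ S β := by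
  simp only [twoPoint, sourcedWeight_apply]

open Classical in
theorem two_pow_mul_curZ (S : Set (Sym2 G.V)) (β : ℝ) :
    2 ^ Fintype.card G.V * G.curZ S β =
      ∑ σ, ∏ e with e ∈ S, Real.exp (β * G.J2 e * spinChar (e : Set G.V) σ) := by
  have hexp : ∀ a s : ℝ, ∑' k : ℕ, a ^ k / (Nat.factorial k) * s ^ k = Real.exp (a * s) := by
    intro a s
    rw [Real.exp_eq_exp_ℝ, NormedSpace.exp_eq_tsum_div]
    exact tsum_congr fun k => by ring
  rw [curZ_eq_tsum_sourcedWeight]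
  refine (two_pow_mul_tsum_currentsWithSources S ∅
    fun e => Real.summable_pow_div_factorial (β * G.J2 e)).trans ?_
  simp only [spinChar_empty, one_mul, hexp, pow_zero, Nat.factorial_zero, Nat.cast_one, div_one,
    Finset.prod_filter]

theorem curZ_pos (S : Set (Sym2 G.V)) (β : ℝ) : 0 < G.curZ S β := by
  classical
  refine pos_of_mul_pos_right (b := G.curZ S β) (a := 2 ^ Fintype.card G.V) ?_ (by positivity)
  rw [two_pow_mul_curZ]
  positivity

/-- The number of sub-multigraphs of the multigraph `m` that lie in `S` and have odd degree exactly
on `A`; the multigraph with `m e` copies of each edge `e` has `∏ e, (m e).choose (n e)`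
sub-multigraphs with multiplicities `n`. -/
def subcurrentCount (S : Set (Sym2 G.V)) (A : Set G.V) (m : Sym2 G.V → ℕ) : ℝ :=
  ∑' n, (currentsWithSources S A).indicator (fun n => ∏ e, ((m e).choose (n e) : ℝ)) n

open Classical in
theorem two_pow_mul_subcurrentCount (S : Set (Sym2 G.V)) (A : Set G.V) (m : Sym2 G.V → ℕ) :
    2 ^ Fintype.card G.V * subcurrentCount S A m =
      ∑ σ, spinChar A σ * ∏ e with e ∈ S, (1 + spinChar (e : Set G.V) σ) ^ m e := by
  have hzero : ∀ (N : ℕ), ∀ k ∉ Finset.range (N + 1), (N.choose k : ℝ) = 0 := fun N k hk => by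
    rw [Nat.choose_eq_zero_of_lt (by simpa using hk), Nat.cast_zero]
  have hbinom : ∀ (N : ℕ) (s : ℝ), ∑' k, (N.choose k : ℝ) * s ^ k = (1 + s) ^ N := by
    intro N s
    rw [tsum_eq_sum (s := Finset.range (N + 1)) fun k hk => by simp [hzero N k hk],
      add_comm 1 s, add_pow]
    exact Finset.sum_congr rfl fun k _ => by rw [one_pow, mul_one, mul_comm]
  refine (two_pow_mul_tsum_currentsWithSources S A
    fun e => summable_of_ne_finset_zero (hzero (m e))).trans ?_
  simp only [hbinom, Nat.choose_zero_right, Nat.cast_one, Finset.prod_filter]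

/-- The connection event `x ↔ y`: some path of `m`-open edges of `S` joins `x` to `y`. -/
def ConnectedIn (S : Set (Sym2 G.V)) (m : Sym2 G.V → ℕ) : G.V → G.V → Prop :=
  Relation.ReflTransGen fun a b => s(a, b) ∈ S ∧ 1 ≤ m s(a, b)

theorem ConnectedIn.mono {S T : Set (Sym2 G.V)} {m n : Sym2 G.V → ℕ} {x y : G.V}
    (h : ConnectedIn S m x y) (hST : S ⊆ T) (hmn : m ≤ n) : ConnectedIn T n x y :=
  Relation.ReflTransGen.mono (fun _ _ hab => ⟨hST hab.1, hab.2.trans (hmn _)⟩) _ _ h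

/-- Flipping the spins of the `n`-cluster of `x` leaves every `n`-open edge unchanged, hence also
the product of the spins at the sources of `n`. -/
theorem connectedIn_of_mem_currentsWithSources_pair {S : Set (Sym2 G.V)} {n : Sym2 G.V → ℕ}
    (hloop : ∀ v, n s(v, v) = 0) {x y : G.V}
    (hn : n ∈ currentsWithSources S {x, y}) : ConnectedIn S n x y := by
  classical
  by_contra hc
  have hxy : x ≠ y := by
    rintro rfl
    exact hc .refl
  let σ : G.V → ℤˣ := fun v => if ConnectedIn S n x v then -1 else 1
  have hopen : ∀ e : Sym2 G.V, spinChar (e : Set G.V) σ ^ n e = 1 := by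
    refine Sym2.ind fun a b => ?_
    by_cases hab : n s(a, b) = 0
    · rw [hab, pow_zero]
    have hadj : s(a, b) ∈ S ∧ 1 ≤ n s(a, b) := ⟨hn.2 _ hab, Nat.one_le_iff_ne_zero.2 hab⟩
    have hne : a ≠ b := by
      rintro rfl
      exact hab (hloop a)
    have hcluster : ConnectedIn S n x a ↔ ConnectedIn S n x b :=
      ⟨fun h => h.tail hadj, fun h => h.tail (by rwa [Sym2.eq_swap])⟩
    have hσ : σ a = σ b := by simp only [σ, hcluster]
    simp [spinChar_pair hne, hσ]
  have hsources : spinChar {x, y} σ = 1 := by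
    rw [← hn.1, spinChar_sources, Finset.prod_eq_one fun e _ => hopen e]
  have hx : σ x = -1 := if_pos Relation.ReflTransGen.refl
  have hy : σ y = 1 := if_neg hc
  rw [spinChar_pair hxy, hx, hy] at hsources
  norm_num at hsources

theorem subcurrentCount_pair_eq_zero {S : Set (Sym2 G.V)} {m : Sym2 G.V → ℕ}
    (hloop : ∀ v, m s(v, v) = 0) {x y : G.V} (hc : ¬ConnectedIn S m x y) :
    subcurrentCount S {x, y} m = 0 := by
  refine (tsum_congr fun n => ?_).trans tsum_zero
  refine Set.indicator_apply_eq_zero.2 fun hn => ?_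
  have hle : ¬n ≤ m := fun hle => hc <|
    (connectedIn_of_mem_currentsWithSources_pair (fun v => by simpa [hloop] using hle s(v, v))
      hn).mono subset_rfl hle
  obtain ⟨e, he⟩ : ∃ e, m e < n e := by simpa [Pi.le_def] using hle
  exact Finset.prod_eq_zero (Finset.mem_univ e) (by simp [Nat.choose_eq_zero_of_lt he])

/-- In the spin expansion of either count, only the spin configurations that are constant on the
`m`-clusters of `S` contribute, and those give the same spin to `x` and `y`. -/
theorem subcurrentCount_pair_eq_subcurrentCount_empty {S : Set (Sym2 G.V)} {m : Sym2 G.V → ℕ}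
    (hloop : ∀ v, m s(v, v) = 0) {x y : G.V} (hxy : x ≠ y) (hc : ConnectedIn S m x y) :
    subcurrentCount S {x, y} m = subcurrentCount S ∅ m := by
  classical
  refine mul_left_cancel₀ (pow_ne_zero (Fintype.card G.V) (two_ne_zero (α := ℝ))) ?_
  rw [two_pow_mul_subcurrentCount, two_pow_mul_subcurrentCount]
  refine Finset.sum_congr rfl fun σ _ => ?_
  by_cases hprod : ∏ e with e ∈ S, (1 + spinChar (e : Set G.V) σ) ^ m e = 0
  · rw [hprod, mul_zero, mul_zero]
  have hstep : ∀ a b, s(a, b) ∈ S ∧ 1 ≤ m s(a, b) → σ a = σ b := by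
    rintro a b ⟨hab, hm⟩
    have hm0 : m s(a, b) ≠ 0 := Nat.one_le_iff_ne_zero.1 hm
    have hne : a ≠ b := by
      rintro rfl
      exact hm0 (hloop a)
    have hfactor := Finset.prod_ne_zero_iff.1 hprod s(a, b) (by simpa using hab)
    rw [Sym2.coe_mk, spinChar_pair hne, pow_ne_zero_iff hm0] at hfactor
    by_contra hσ
    simp [Int.units_ne_iff_eq_neg.1 hσ] at hfactor
  have hσ : σ x = σ y := by
    clear hxy
    induction hc with
    | refl => rfl
    | tail _ hbc ih => exact ih.trans (hstep _ _ hbc)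
  rw [spinChar_pair hxy, hσ, Int.units_mul_self, spinChar_empty]
  norm_num

theorem summable_sourcedWeight_mul_sourcedWeight (S T : Set (Sym2 G.V)) (β : ℝ) (A B : Set G.V) :
    Summable fun p : (Sym2 G.V → ℕ) × (Sym2 G.V → ℕ) =>
      sourcedWeight S β A p.1 * sourcedWeight T β B p.2 :=
  summable_mul_of_summable_norm (summable_sourcedWeight S β A).norm
    (summable_sourcedWeight T β B).norm

theorem tsum_sourcedWeight_mul_tsum_sourcedWeight (S T : Set (Sym2 G.V)) (β : ℝ)
    (A B : Set G.V) :
    (∑' n, sourcedWeight S β A n) * ∑' n, sourcedWeight T β B n =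
      ∑' p : (Sym2 G.V → ℕ) × (Sym2 G.V → ℕ),
        sourcedWeight S β A p.1 * sourcedWeight T β B p.2 :=
  tsum_mul_tsum_of_summable_norm (summable_sourcedWeight S β A).norm
    (summable_sourcedWeight T β B).norm

open Classical in
theorem sourcedWeight_mul_sourcedWeight (S : Set (Sym2 G.V)) (β : ℝ) (A B : Set G.V)
    (n₁ n₂ : Sym2 G.V → ℕ) :
    sourcedWeight S β A n₁ * sourcedWeight Set.univ β B n₂ =
      sourcedWeight Set.univ β (A ∆ B) (n₁ + n₂) * (currentsWithSources S A).indicator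
        (fun n => ∏ e, (((n₁ + n₂) e).choose (n e) : ℝ)) n₁ := by
  by_cases h₁ : n₁ ∈ currentsWithSources S A
  · have hsources : n₁ + n₂ ∈ currentsWithSources Set.univ (A ∆ B) ↔
        n₂ ∈ currentsWithSources Set.univ B := by
      simp [currentsWithSources, supportedOn_univ, sources_add, h₁.1]
    by_cases h₂ : n₂ ∈ currentsWithSources Set.univ B
    · simp only [sourcedWeight, Set.indicator_of_mem h₁, Set.indicator_of_mem h₂,
        Set.indicator_of_mem (hsources.2 h₂), curWeight_mul_curWeight]
    · simp only [sourcedWeight, Set.indicator_of_notMem h₂,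
        Set.indicator_of_notMem (mt hsources.1 h₂), mul_zero, zero_mul]
  · simp only [sourcedWeight, Set.indicator_of_notMem h₁, zero_mul, mul_zero]

theorem tsum_indicator_sourcedWeight_mul_sourcedWeight (S : Set (Sym2 G.V)) (β : ℝ)
    (A B : Set G.V) (E : Set (Sym2 G.V → ℕ)) :
    ∑' p : (Sym2 G.V → ℕ) × (Sym2 G.V → ℕ), {p | p.1 + p.2 ∈ E}.indicator
        (fun p => sourcedWeight S β A p.1 * sourcedWeight Set.univ β B p.2) p =
      ∑' m, E.indicator
        (fun m => sourcedWeight Set.univ β (A ∆ B) m * subcurrentCount S A m) m := by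
  let pairWeight (q : (Sym2 G.V → ℕ) × (Sym2 G.V → ℕ)) : ℝ :=
    E.indicator (sourcedWeight Set.univ β (A ∆ B)) q.1 *
      (currentsWithSources S A).indicator (fun n => ∏ e, ((q.1 e).choose (n e) : ℝ)) q.2
  have hvanish : ∀ m n : Sym2 G.V → ℕ, ¬n ≤ m → pairWeight (m, n) = 0 := by
    intro m n hle
    obtain ⟨e, he⟩ : ∃ e, m e < n e := by simpa [Pi.le_def] using hle
    refine mul_eq_zero_of_right _ (Set.indicator_apply_eq_zero.2 fun _ => ?_)
    exact Finset.prod_eq_zero (Finset.mem_univ e) (by simp [Nat.choose_eq_zero_of_lt he])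
  have hpair : ∀ p : (Sym2 G.V → ℕ) × (Sym2 G.V → ℕ), pairWeight (p.1 + p.2, p.1) =
      {p | p.1 + p.2 ∈ E}.indicator
        (fun p => sourcedWeight S β A p.1 * sourcedWeight Set.univ β B p.2) p := by
    intro p
    by_cases hp : p.1 + p.2 ∈ E <;> simp [pairWeight, hp, sourcedWeight_mul_sourcedWeight]
  have hsummable : Summable fun p : (Sym2 G.V → ℕ) × (Sym2 G.V → ℕ) =>
      pairWeight (p.1 + p.2, p.1) := by
    simpa only [hpair] using
      (summable_sourcedWeight_mul_sourcedWeight S Set.univ β A B).indicator {p | p.1 + p.2 ∈ E}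
  have hsum := (hasSum_comp_add_fst_iff hvanish).1 hsummable.hasSum
  calc _ = ∑' p : (Sym2 G.V → ℕ) × (Sym2 G.V → ℕ), pairWeight (p.1 + p.2, p.1) :=
        tsum_congr fun p => (hpair p).symm
    _ = ∑' q, pairWeight q := hsum.tsum_eq.symm
    _ = ∑' m, ∑' n, pairWeight (m, n) := hsum.summable.tsum_prod
    _ = _ := tsum_congr fun m => by
        simp only [pairWeight, tsum_mul_left, subcurrentCount, Set.indicator_mul_left]

theorem switching_lemma (S : Set (Sym2 G.V)) (β : ℝ) {x y : G.V} (hxy : x ≠ y) (B : Set G.V)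
    (E : Set (Sym2 G.V → ℕ)) :
    ∑' p : (Sym2 G.V → ℕ) × (Sym2 G.V → ℕ), {p | p.1 + p.2 ∈ E}.indicator
        (fun p => sourcedWeight S β {x, y} p.1 * sourcedWeight Set.univ β B p.2) p =
      ∑' p : (Sym2 G.V → ℕ) × (Sym2 G.V → ℕ),
        {p | p.1 + p.2 ∈ E ∩ {m | ConnectedIn S m x y}}.indicator
          (fun p => sourcedWeight S β ∅ p.1 * sourcedWeight Set.univ β ({x, y} ∆ B) p.2) p := by
  rw [tsum_indicator_sourcedWeight_mul_sourcedWeight,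
    tsum_indicator_sourcedWeight_mul_sourcedWeight, ← Set.bot_eq_empty, bot_symmDiff,
    Set.bot_eq_empty]
  refine tsum_congr fun m => ?_
  rw [← Set.indicator_indicator]
  refine congrFun (Set.indicator_congr fun m _ => ?_) m
  by_cases hw : sourcedWeight Set.univ β ({x, y} ∆ B) m = 0
  · simp [Set.indicator, hw]
  have hloop : ∀ v, m s(v, v) = 0 := fun v =>
    apply_eq_zero_of_curWeight_ne_zero (Set.indicator_apply_ne_zero.1 hw).2 (J2_diag v)
  by_cases hc : ConnectedIn S m x y
  · simp [hc, subcurrentCount_pair_eq_subcurrentCount_empty hloop hxy hc]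
  · simp [hc, subcurrentCount_pair_eq_zero hloop hc]

/-- The paper's event `ℬ_e` for the edge `e = {x, y}` of the subgraph with edge set `S`, without the
condition that the currents have no sources. -/
def disconnectionEvent (S : Set (Sym2 G.V)) (x y : G.V) :
    Set ((Sym2 G.V → ℕ) × (Sym2 G.V → ℕ)) :=
  {p | p.1 s(x, y) = 0 ∧ p.2 s(x, y) = 1 ∧
    G.conn Set.univ s(x, y) (fun e => p.1 e + p.2 e) x y ∧
    ¬G.conn S s(x, y) (fun e => p.1 e + p.2 e) x y}

theorem conn_iff_connectedIn {S : Set (Sym2 G.V)} {e : Sym2 G.V} {m n : Sym2 G.V → ℕ}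
    (hn : n e = 0) (hmn : ∀ f ≠ e, m f = n f) {x y : G.V} :
    G.conn S e m x y ↔ ConnectedIn S n x y := by
  have hadj : ∀ a b, (s(a, b) ≠ e ∧ s(a, b) ∈ S ∧ 1 ≤ m s(a, b)) ↔
      s(a, b) ∈ S ∧ 1 ≤ n s(a, b) := by
    intro a b
    by_cases h : s(a, b) = e
    · simp [h, hn]
    · simp [h, hmn _ h]
  simp only [conn, ConnectedIn, hadj]

open Classical in
theorem add_single_mem_disconnectionEvent_iff {S : Set (Sym2 G.V)} {β : ℝ} {x y : G.V}
    (he : s(x, y) ∈ S) {n₁ n₂ : Sym2 G.V → ℕ}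
    (hw : sourcedWeight Set.univ β {x, y} n₂ ≠ 0) :
    (n₁, n₂ + Pi.single s(x, y) 1) ∈ disconnectionEvent S x y ↔
      ¬ConnectedIn S (n₁ + n₂) x y := by
  by_cases h0 : (n₁ + n₂) s(x, y) = 0
  · obtain ⟨h₁, h₂⟩ : n₁ s(x, y) = 0 ∧ n₂ s(x, y) = 0 := by simpa using h0
    have hconn : ∀ T : Set (Sym2 G.V),
        G.conn T s(x, y) (fun e => n₁ e + (n₂ + Pi.single s(x, y) 1 : Sym2 G.V → ℕ) e) x y ↔
          ConnectedIn T (n₁ + n₂) x y :=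
      fun T => conn_iff_connectedIn h0 fun f hf => by simp [hf]
    have huniv : ConnectedIn Set.univ (n₁ + n₂) x y :=
      (connectedIn_of_mem_currentsWithSources_pair
        (fun v => apply_eq_zero_of_curWeight_ne_zero
          (Set.indicator_apply_ne_zero.1 hw).2 (J2_diag v))
        (Set.mem_of_indicator_ne_zero hw)).mono subset_rfl le_add_self
    simp only [disconnectionEvent, Set.mem_ofPred_eq, hconn]
    simp [huniv, h₁, h₂]
  · have hc : ConnectedIn S (n₁ + n₂) x y := .single ⟨he, Nat.one_le_iff_ne_zero.2 h0⟩
    have hne : ¬(n₁ s(x, y) = 0 ∧ n₂ s(x, y) = 0) := by simpa using h0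
    simp only [hc, disconnectionEvent, Set.mem_ofPred_eq, Pi.add_apply, Pi.single_eq_same]
    grind

open Classical in
theorem sourcedWeight_add_single (β : ℝ) {x y : G.V}
    {n : Sym2 G.V → ℕ} (hn : n s(x, y) = 0) :
    sourcedWeight Set.univ β ∅ (n + Pi.single s(x, y) 1) =
      β * G.J2 s(x, y) * sourcedWeight Set.univ β {x, y} n := by
  have hsources : n + Pi.single s(x, y) 1 ∈ currentsWithSources Set.univ ∅ ↔
      n ∈ currentsWithSources Set.univ {x, y} := by
    simp only [currentsWithSources, Set.mem_ofPred_eq, supportedOn_univ, and_true, sources_add,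
      sources_single, ← Set.bot_eq_empty, symmDiff_eq_bot]
  by_cases h : n ∈ currentsWithSources Set.univ {x, y}
  · simp only [sourcedWeight, Set.indicator_of_mem h, Set.indicator_of_mem (hsources.2 h),
      curWeight_add_single β hn]
  · simp only [sourcedWeight, Set.indicator_of_notMem h,
      Set.indicator_of_notMem (mt hsources.1 h), mul_zero]

open Classical in
theorem indicator_disconnectionEvent_add_single {S : Set (Sym2 G.V)}
    (β : ℝ) {x y : G.V} (he : s(x, y) ∈ S) (n₁ n₂ : Sym2 G.V → ℕ) :
    (disconnectionEvent S x y).indicator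
        (fun p => sourcedWeight S β ∅ p.1 * sourcedWeight Set.univ β ∅ p.2)
        (n₁, n₂ + Pi.single s(x, y) 1) =
      β * G.J2 s(x, y) * {p | ¬ConnectedIn S (p.1 + p.2) x y}.indicator
        (fun p => sourcedWeight S β ∅ p.1 * sourcedWeight Set.univ β {x, y} p.2) (n₁, n₂) := by
  by_cases hn₂ : n₂ s(x, y) = 0
  · by_cases hw : sourcedWeight Set.univ β {x, y} n₂ = 0
    · simp [Set.indicator_apply, sourcedWeight_add_single β hn₂, hw]
    · simp only [Set.indicator_apply, add_single_mem_disconnectionEvent_iff he hw,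
        Set.mem_ofPred_eq, sourcedWeight_add_single β hn₂]
      split_ifs <;> ring
  · have hc : ConnectedIn S (n₁ + n₂) x y :=
      .single ⟨he, le_add_left (Nat.one_le_iff_ne_zero.2 hn₂)⟩
    simp [disconnectionEvent, hn₂, hc]

theorem tsum_indicator_disconnectionEvent {S : Set (Sym2 G.V)} (β : ℝ) {x y : G.V}
    (he : s(x, y) ∈ S) :
    ∑' p, (disconnectionEvent S x y).indicator
        (fun p => sourcedWeight S β ∅ p.1 * sourcedWeight Set.univ β ∅ p.2) p =
      β * G.J2 s(x, y) *
        ∑' p : (Sym2 G.V → ℕ) × (Sym2 G.V → ℕ), {p | ¬ConnectedIn S (p.1 + p.2) x y}.indicator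
          (fun p => sourcedWeight S β ∅ p.1 * sourcedWeight Set.univ β {x, y} p.2) p := by
  classical
  have hinj : Function.Injective fun p : (Sym2 G.V → ℕ) × (Sym2 G.V → ℕ) =>
      (p.1, p.2 + Pi.single s(x, y) 1) := by
    rintro ⟨a, b⟩ ⟨c, d⟩ h
    simpa using h
  rw [← hinj.tsum_eq, ← tsum_mul_left]
  · exact tsum_congr fun p => indicator_disconnectionEvent_add_single β he p.1 p.2
  · rintro ⟨n₁, n₂⟩ hp
    have hn₂ : n₂ s(x, y) = 1 := (Set.mem_of_indicator_ne_zero hp).2.1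
    have hle : Pi.single s(x, y) 1 ≤ n₂ := by
      intro f
      by_cases hf : f = s(x, y) <;> simp [hf, hn₂]
    exact ⟨(n₁, n₂ - Pi.single s(x, y) 1), by simp [tsub_add_cancel_of_le hle]⟩

theorem twoPoint_sub_twoPoint_mul_curZ_mul_curZ (S : Set (Sym2 G.V)) (β : ℝ) {x y : G.V}
    (hxy : x ≠ y) :
    (G.twoPoint Set.univ β x y - G.twoPoint S β x y) * (G.curZ S β * G.curZ Set.univ β) =
      ∑' p : (Sym2 G.V → ℕ) × (Sym2 G.V → ℕ), {p | ¬ConnectedIn S (p.1 + p.2) x y}.indicator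
        (fun p => sourcedWeight S β ∅ p.1 * sourcedWeight Set.univ β {x, y} p.2) p := by
  have hS := (curZ_pos S β).ne'
  have huniv := (curZ_pos (G := G) Set.univ β).ne'
  let pairWeight (p : (Sym2 G.V → ℕ) × (Sym2 G.V → ℕ)) : ℝ :=
    sourcedWeight S β ∅ p.1 * sourcedWeight Set.univ β {x, y} p.2
  have hsummable : Summable pairWeight :=
    summable_sourcedWeight_mul_sourcedWeight S Set.univ β ∅ {x, y}
  have hswitch : ∑' p : (Sym2 G.V → ℕ) × (Sym2 G.V → ℕ),
      sourcedWeight S β {x, y} p.1 * sourcedWeight Set.univ β ∅ p.2 =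
        ∑' p, {p | ConnectedIn S (p.1 + p.2) x y}.indicator pairWeight p := by
    have hsymmDiff : ({x, y} : Set G.V) ∆ ∅ = {x, y} := symmDiff_bot _
    simpa [hsymmDiff] using switching_lemma S β hxy ∅ Set.univ
  calc (G.twoPoint Set.univ β x y - G.twoPoint S β x y) * (G.curZ S β * G.curZ Set.univ β)
      = (∑' n, sourcedWeight S β ∅ n) * (∑' n, sourcedWeight Set.univ β {x, y} n) -
          (∑' n, sourcedWeight S β {x, y} n) * ∑' n, sourcedWeight Set.univ β ∅ n := by
        rw [twoPoint_eq_tsum_sourcedWeight_div, twoPoint_eq_tsum_sourcedWeight_div,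
          ← curZ_eq_tsum_sourcedWeight, ← curZ_eq_tsum_sourcedWeight]
        field_simp
    _ = _ := by
        rw [tsum_sourcedWeight_mul_tsum_sourcedWeight, tsum_sourcedWeight_mul_tsum_sourcedWeight,
          hswitch, ← hsummable.tsum_sub (hsummable.indicator _)]
        refine tsum_congr fun p => ?_
        by_cases hp : ConnectedIn S (p.1 + p.2) x y <;> simp [pairWeight, hp]

open Classical in
theorem statement17_general {S : Set (Sym2 G.V)} {x y : G.V} (he : s(x, y) ∈ S) (β : ℝ) :
    β * G.J2 s(x, y) * (G.twoPoint Set.univ β x y - G.twoPoint S β x y) =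
      (∑' nn : (Sym2 G.V → ℕ) × (Sym2 G.V → ℕ),
        if G.sources nn.1 = ∅ ∧ G.supportedOn S nn.1 ∧ G.sources nn.2 = ∅ ∧
            nn.1 s(x, y) = 0 ∧ nn.2 s(x, y) = 1 ∧
            G.conn Set.univ s(x, y) (fun e' => nn.1 e' + nn.2 e') x y ∧
            ¬ G.conn S s(x, y) (fun e' => nn.1 e' + nn.2 e') x y
          then G.curWeight β nn.1 * G.curWeight β nn.2 else 0) /
        (G.curZ S β * G.curZ Set.univ β) := by
  rcases eq_or_ne x y with rfl | hxy
  · simp [J2_diag, conn, Relation.ReflTransGen.refl]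
  rw [eq_div_iff (mul_pos (curZ_pos S β) (curZ_pos Set.univ β)).ne', mul_assoc,
    twoPoint_sub_twoPoint_mul_curZ_mul_curZ S β hxy, ← tsum_indicator_disconnectionEvent β he]
  refine tsum_congr fun nn => ?_
  simp only [Set.indicator_apply, sourcedWeight_apply, supportedOn_univ, disconnectionEvent,
    Set.mem_ofPred_eq]
  grind

open Classical in
theorem statement17 (G : FinWeightedGraph) (S : Set (Sym2 G.V))
    (hS : ∀ e ∈ S, 0 < G.J2 e) (e : Sym2 G.V) (he : e ∈ S)
    (x y : G.V) (hxy : e = s(x, y)) (β : ℝ) (hβ : 0 ≤ β) :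
    β * G.J2 e * (G.twoPoint Set.univ β x y - G.twoPoint S β x y) =
      (∑' nn : (Sym2 G.V → ℕ) × (Sym2 G.V → ℕ),
        if G.sources nn.1 = ∅ ∧ G.supportedOn S nn.1 ∧ G.sources nn.2 = ∅ ∧
            nn.1 e = 0 ∧ nn.2 e = 1 ∧
            G.conn Set.univ e (fun e' => nn.1 e' + nn.2 e') x y ∧
            ¬ G.conn S e (fun e' => nn.1 e' + nn.2 e') x y
          then G.curWeight β nn.1 * G.curWeight β nn.2 else 0) /
        (G.curZ S β * G.curZ Set.univ β) := by
  subst hxy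
  exact statement17_general he β

end FinWeightedGraph

end IsingPaper
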